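/- Let p be an odd prime and G a finite powerful p-group. Then for all i, j ≥ 1 the subgroup Ω_i(G^{p^j}) is powerfully nilpotent, and its powerful nilpotency class is at most i. -/

import Mathlib

/-!
Write `D n` for `G ^ (p ^ n)`. If `[c, x]` is central and has order dividing the odd prime `p`,
then `(x * c) ^ p = x ^ p * c ^ p`, because `p` divides `p.choose 2`. Applied modulo suitable
subgroups this gives `[D m, D n] ≤ D (m + n + 1)`, and also that every element of `D (n + 1)` is
the `p`-th power of an element of `D n`.

Two facts are proved together by induction on `|G|`, passing to the proper powerful subgroups
`⟨y, G ^ p⟩` and to quotients by subgroups `Ω_1`: the exponent of `Ω_i(G)` divides `p ^ i`, and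
`[Ω_{b + 1}(D a), Ω_a(D b)] = 1`. Factoring out `Ω_1(G)` repeatedly, if `x ∈ D a` and `y ∈ D b`
satisfy `x ^ (p ^ (b + n + 1)) = 1` and `y ^ (p ^ (a + n)) = 1`, then `[x, y] ^ (p ^ n) = 1`.

The chain in `K = Ω_i(D j)` is `H_0 = 1` and `H_m = K ∩ Ω_{m + 1}(D (i - m + j))`. By the order
estimate the commutator of `x ∈ H_{m + 1}` and `y ∈ K` has order dividing `p ^ m`. For `m = 0` it
is trivial; for `m ≥ 1` it lies in `D (i - m + j + 1)`, so it is the `p`-th power of an element of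
`D (i - m + j)` of order dividing `p ^ (m + 1)`, that is, of an element of `H_m`. The top step of
the chain shows that `K` is powerful.
-/

/-- The subgroup generated by the `n`-th powers of the elements of `H`. -/
def subgroupPow {G : Type*} [Group G] (H : Subgroup G) (n : ℕ) : Subgroup G :=
  Subgroup.closure {x | ∃ h ∈ H, h ^ n = x}

/-- `Ω_i(H)`: the subgroup generated by the elements of `H` whose order divides `p ^ i`. -/
def omegaSubgroup {G : Type*} [Group G] (p i : ℕ) (H : Subgroup G) : Subgroup G :=
  Subgroup.closure {x | x ∈ H ∧ x ^ p ^ i = 1}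

/-- A finite `p`-group `G` is powerful if `[G,G] ≤ G^p` when `p` is odd,
and `[G,G] ≤ G^4` when `p = 2`. -/
def IsPowerful (p : ℕ) (G : Type*) [Group G] : Prop :=
  if p = 2 then commutator G ≤ subgroupPow (⊤ : Subgroup G) 4
  else commutator G ≤ subgroupPow (⊤ : Subgroup G) p

/-- The subgroup of `n`-th powers of the whole group is normal (indeed characteristic). -/
instance subgroupPow_top_normal {G : Type*} [Group G] (n : ℕ) :
    (subgroupPow (⊤ : Subgroup G) n).Normal := by
  constructor
  intro x hx g
  have key : Subgroup.map (MulAut.conj g).toMonoidHom (subgroupPow (⊤ : Subgroup G) n)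
      ≤ subgroupPow (⊤ : Subgroup G) n := by
    rw [subgroupPow, MonoidHom.map_closure]
    apply Subgroup.closure_le _ |>.mpr
    rintro y ⟨z, ⟨h, -, rfl⟩, rfl⟩
    exact Subgroup.subset_closure ⟨(MulAut.conj g) h, trivial, by
      simp [((MulAut.conj g).toMonoidHom.map_pow h n).symm]⟩
  have hmem : (MulAut.conj g) x ∈
      Subgroup.map (MulAut.conj g).toMonoidHom (subgroupPow (⊤ : Subgroup G) n) :=
    Subgroup.mem_map_of_mem _ hx
  simpa [MulAut.conj_apply] using key hmem

/-- A powerfully central chain `{1} = H 0 ≤ H 1 ≤ ⋯ ≤ H n = G` of length `n`: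
`[H (k+1), G] ≤ (H k)^p` for all `k < n`. -/
def IsPowerfullyCentralChain (p : ℕ) {G : Type*} [Group G] (n : ℕ) (H : ℕ → Subgroup G) : Prop :=
  H 0 = ⊥ ∧ H n = ⊤ ∧ (∀ k, k < n → H k ≤ H (k + 1)) ∧
    ∀ k, k < n → ⁅H (k + 1), (⊤ : Subgroup G)⁆ ≤ subgroupPow (H k) p

/-- A group is powerfully nilpotent if it is powerful and admits a powerfully central chain. -/
def IsPowerfullyNilpotent (p : ℕ) (G : Type*) [Group G] : Prop :=
  IsPowerful p G ∧ ∃ (n : ℕ) (H : ℕ → Subgroup G), IsPowerfullyCentralChain p n H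

/-- The powerful nilpotency class: the least possible length of a powerfully central chain. -/
noncomputable def powerfulNilpotencyClass (p : ℕ) (G : Type*) [Group G] : ℕ :=
  sInf {n | ∃ H : ℕ → Subgroup G, IsPowerfullyCentralChain p n H}

open scoped commutatorElement

/-! ### Commutators modulo a normal subgroup -/

section Commutator

variable {G : Type*} [Group G]

theorem commute_mk_iff {J : Subgroup G} [J.Normal] {a b : G} :
    Commute (a : G ⧸ J) (b : G ⧸ J) ↔ ⁅a, b⁆ ∈ J := by
  rw [← commutatorElement_eq_one_iff_commute]
  exact QuotientGroup.eq_one_iff ⁅a, b⁆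

theorem commutator_le_iff_le_comap_centralizer {A K J : Subgroup G} [J.Normal] :
    ⁅A, K⁆ ≤ J ↔ A ≤ (Subgroup.centralizer
      (K.map (QuotientGroup.mk' J) : Set (G ⧸ J))).comap (QuotientGroup.mk' J) := by
  rw [← Subgroup.map_le_iff_le_comap, ← Subgroup.commutator_eq_bot_iff_le_centralizer,
    ← Subgroup.map_commutator, Subgroup.map_eq_bot_iff, QuotientGroup.ker_mk']

theorem commutator_closure_le {S : Set G} {K J : Subgroup G} [J.Normal]
    (h : ∀ s ∈ S, ∀ g ∈ K, ⁅s, g⁆ ∈ J) : ⁅Subgroup.closure S, K⁆ ≤ J := by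
  rw [commutator_le_iff_le_comap_centralizer, Subgroup.closure_le]
  rintro s hs _ ⟨g, hg, rfl⟩
  exact (commute_mk_iff.mpr (h s hs g hg)).symm.eq

theorem sup_commutator_le {A B K J : Subgroup G} [J.Normal] (hA : ⁅A, K⁆ ≤ J)
    (hB : ⁅B, K⁆ ≤ J) : ⁅A ⊔ B, K⁆ ≤ J := by
  rw [commutator_le_iff_le_comap_centralizer] at *
  exact sup_le hA hB

theorem commutator_sup_self_le {A N : Subgroup G} [IsMulCommutative A] [N.Normal] :
    ⁅A ⊔ N, A ⊔ N⁆ ≤ ⁅N, (⊤ : Subgroup G)⁆ := by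
  have hN (K : Subgroup G) : ⁅N, K⁆ ≤ ⁅N, (⊤ : Subgroup G)⁆ :=
    Subgroup.commutator_mono le_rfl le_top
  have hA : ⁅A, A⁆ ≤ ⁅N, (⊤ : Subgroup G)⁆ :=
    (Subgroup.commutator_self_eq_bot_iff.mpr inferInstance).trans_le bot_le
  refine sup_commutator_le ?_ (hN _)
  rw [Subgroup.commutator_comm]
  exact sup_commutator_le hA (hN A)

theorem eq_bot_of_le_commutator_top [Group.IsNilpotent G] {X : Subgroup G}
    (h : X ≤ ⁅X, (⊤ : Subgroup G)⁆) : X = ⊥ := by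
  have hX (n : ℕ) : X ≤ (⊤ : Subgroup G).lowerCentralSeries n := by
    induction n with
    | zero => exact le_top
    | succ n ih => exact h.trans (Subgroup.commutator_mono ih le_rfl)
  obtain ⟨n, hn⟩ := Subgroup.nilpotent_iff_lowerCentralSeries.mp ‹Group.IsNilpotent G›
  exact eq_bot_iff.mpr (hn ▸ hX n)

theorem le_of_le_sup_commutator_top [Group.IsNilpotent G] {X Y : Subgroup G} [Y.Normal]
    (h : X ≤ Y ⊔ ⁅X, (⊤ : Subgroup G)⁆) : X ≤ Y := by
  rw [← QuotientGroup.ker_mk' Y, ← Subgroup.map_eq_bot_iff]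
  apply eq_bot_of_le_commutator_top
  refine (Subgroup.map_mono h).trans ?_
  rw [Subgroup.map_sup, QuotientGroup.map_mk'_self, bot_sup_eq, Subgroup.map_commutator]
  exact Subgroup.commutator_mono le_rfl le_top

theorem closure_normal_of_conj_mem {S : Set G} (h : ∀ s ∈ S, ∀ g : G, g * s * g⁻¹ ∈ S) :
    (Subgroup.closure S).Normal := by
  have hS : Group.conjugatesOfSet S = S := by
    refine subset_antisymm (fun x hx => ?_) Group.subset_conjugatesOfSet
    obtain ⟨s, hs, hsx⟩ := Group.mem_conjugatesOfSet_iff.mp hx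
    obtain ⟨g, rfl⟩ := isConj_iff.mp hsx
    exact h s hs g
  rw [← hS]
  exact Subgroup.normalClosure_normal

end Commutator

/-! ### Powers in class two -/

section ClassTwo

variable {G : Type*} [Group G]

theorem pow_mul_of_commute_commutator {x c : G} (hx : Commute ⁅c, x⁆ x) (hc : Commute ⁅c, x⁆ c)
    (n : ℕ) : c ^ n * x = x * (c ^ n * ⁅c, x⁆ ^ n) := by
  have hconj : x⁻¹ * c * x⁻¹⁻¹ = c * ⁅c, x⁆ := by
    calc x⁻¹ * c * x⁻¹⁻¹ = x⁻¹ * (⁅c, x⁆ * x) * c := by rw [commutatorElement_def]; group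
      _ = ⁅c, x⁆ * c := by rw [hx.eq, inv_mul_cancel_left]
      _ = c * ⁅c, x⁆ := hc.eq
  rw [← hc.symm.mul_pow, ← hconj, conj_pow]
  group

theorem mul_pow_of_commute_commutator {x c : G} (hx : Commute ⁅c, x⁆ x) (hc : Commute ⁅c, x⁆ c)
    (n : ℕ) : (x * c) ^ n = x ^ n * c ^ n * ⁅c, x⁆ ^ n.choose 2 := by
  induction n with
  | zero => simp
  | succ n ih =>
    have hxc : Commute (⁅c, x⁆ ^ n.choose 2) (x * c) := (hx.mul_right hc).pow_left _
    calc (x * c) ^ (n + 1)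
        = x ^ n * c ^ n * (x * c * ⁅c, x⁆ ^ n.choose 2) := by
          rw [pow_succ, ih, mul_assoc, hxc.eq]
      _ = x ^ n * (c ^ n * x) * c * ⁅c, x⁆ ^ n.choose 2 := by simp only [mul_assoc]
      _ = x ^ n * x * c ^ n * (⁅c, x⁆ ^ n * c) * ⁅c, x⁆ ^ n.choose 2 := by
          rw [pow_mul_of_commute_commutator hx hc]; simp only [mul_assoc]
      _ = x ^ (n + 1) * c ^ (n + 1) * (⁅c, x⁆ ^ n * ⁅c, x⁆ ^ n.choose 2) := by
          rw [(hc.pow_left n).eq, pow_succ, pow_succ]; simp only [mul_assoc]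
      _ = x ^ (n + 1) * c ^ (n + 1) * ⁅c, x⁆ ^ (n + 1).choose 2 := by
          rw [← pow_add, Nat.choose_succ_succ' n 1, Nat.choose_one_right]

theorem dvd_choose_two_of_odd {n : ℕ} (hn : Odd n) : n ∣ n.choose 2 := by
  obtain ⟨k, rfl⟩ := hn
  exact ⟨k, by rw [Nat.choose_two_right, Nat.add_sub_cancel, mul_left_comm,
    Nat.mul_div_cancel_left _ two_pos]⟩

theorem mul_pow_of_odd {n : ℕ} (hn : Odd n) {x c : G} (hx : Commute ⁅c, x⁆ x)
    (hc : Commute ⁅c, x⁆ c) (hd : ⁅c, x⁆ ^ n = 1) : (x * c) ^ n = x ^ n * c ^ n := by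
  obtain ⟨k, hk⟩ := dvd_choose_two_of_odd hn
  rw [mul_pow_of_commute_commutator hx hc, hk, pow_mul, hd, one_pow, mul_one]

theorem commutator_pow_left_of_odd {n : ℕ} (hn : Odd n) {x g : G}
    (hx : Commute ⁅⁅x, g⁆, x⁻¹⁆ x) (hc : Commute ⁅⁅x, g⁆, x⁻¹⁆ ⁅x, g⁆)
    (hd : ⁅⁅x, g⁆, x⁻¹⁆ ^ n = 1) : ⁅x ^ n, g⁆ = ⁅x, g⁆ ^ n := by
  have hconj : g * x⁻¹ * g⁻¹ = x⁻¹ * ⁅x, g⁆ := by rw [commutatorElement_def]; group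
  calc ⁅x ^ n, g⁆ = x ^ n * (g * x⁻¹ * g⁻¹) ^ n := by
        rw [conj_pow, commutatorElement_def]; group
    _ = ⁅x, g⁆ ^ n := by
        rw [hconj, mul_pow_of_odd hn hx.inv_right hc hd, inv_pow, mul_inv_cancel_left]

variable {J : Subgroup G} [J.Normal]

theorem mk_mul_pow_of_odd {n : ℕ} (hn : Odd n) {x c : G} (hx : ⁅⁅c, x⁆, x⁆ ∈ J)
    (hc : ⁅⁅c, x⁆, c⁆ ∈ J) (hd : ⁅c, x⁆ ^ n ∈ J) :
    ((x * c : G) : G ⧸ J) ^ n = (x : G ⧸ J) ^ n * (c : G ⧸ J) ^ n :=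
  mul_pow_of_odd (G := G ⧸ J) (x := x) (c := c) hn (commute_mk_iff.mpr hx)
    (commute_mk_iff.mpr hc) ((QuotientGroup.eq_one_iff (⁅c, x⁆ ^ n)).mpr hd)

theorem commutator_pow_left_mem_of_odd {n : ℕ} (hn : Odd n) {x g : G}
    (hx : ⁅⁅⁅x, g⁆, x⁻¹⁆, x⁆ ∈ J) (hc : ⁅⁅⁅x, g⁆, x⁻¹⁆, ⁅x, g⁆⁆ ∈ J)
    (hd : ⁅⁅x, g⁆, x⁻¹⁆ ^ n ∈ J) (hcn : ⁅x, g⁆ ^ n ∈ J) : ⁅x ^ n, g⁆ ∈ J := by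
  rw [← QuotientGroup.eq_one_iff] at hd hcn ⊢
  exact (commutator_pow_left_of_odd (G := G ⧸ J) (x := x) (g := g) hn
    (commute_mk_iff.mpr hx) (commute_mk_iff.mpr hc) hd).trans hcn

end ClassTwo

/-! ### Subgroups generated by powers -/

section SubgroupPow

variable {G : Type*} [Group G]

theorem pow_mem_subgroupPow {H : Subgroup G} {x : G} (n : ℕ) (hx : x ∈ H) :
    x ^ n ∈ subgroupPow H n :=
  Subgroup.subset_closure ⟨x, hx, rfl⟩

theorem subgroupPow_le_iff {H K : Subgroup G} {n : ℕ} :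
    subgroupPow H n ≤ K ↔ ∀ x ∈ H, x ^ n ∈ K := by
  rw [subgroupPow, Subgroup.closure_le]
  exact ⟨fun h x hx => h ⟨x, hx, rfl⟩, by rintro h _ ⟨x, hx, rfl⟩; exact h x hx⟩

theorem subgroupPow_le (H : Subgroup G) (n : ℕ) : subgroupPow H n ≤ H :=
  subgroupPow_le_iff.mpr fun _ hx => H.pow_mem hx n

theorem subgroupPow_mono {H K : Subgroup G} (h : H ≤ K) (n : ℕ) :
    subgroupPow H n ≤ subgroupPow K n :=
  subgroupPow_le_iff.mpr fun _ hx => pow_mem_subgroupPow n (h hx)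

theorem map_subgroupPow {G' : Type*} [Group G'] (f : G →* G') (H : Subgroup G) (n : ℕ) :
    (subgroupPow H n).map f = subgroupPow (H.map f) n := by
  apply le_antisymm
  · rw [Subgroup.map_le_iff_le_comap, subgroupPow_le_iff]
    intro x hx
    rw [Subgroup.mem_comap, map_pow]
    exact pow_mem_subgroupPow n (Subgroup.mem_map_of_mem f hx)
  · rw [subgroupPow_le_iff]
    rintro _ ⟨x, hx, rfl⟩
    exact ⟨x ^ n, pow_mem_subgroupPow n hx, map_pow f x n⟩

instance subgroupPow_normal (H : Subgroup G) [hH : H.Normal] (n : ℕ) :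
    (subgroupPow H n).Normal :=
  closure_normal_of_conj_mem <| by
    rintro _ ⟨x, hx, rfl⟩ g
    exact ⟨g * x * g⁻¹, hH.conj_mem x hx g, conj_pow⟩

theorem index_eq_of_isCoatom [Finite G] {p : ℕ} [hp : Fact p.Prime] (hG : IsPGroup p G)
    {M : Subgroup G} (hM : IsCoatom M) : M.index = p := by
  obtain ⟨k, hk⟩ := hG.index M
  have hk0 : k ≠ 0 := by
    rintro rfl
    exact hM.1 (Subgroup.index_eq_one.mp (hk.trans (pow_zero p)))
  obtain ⟨m, hm⟩ := IsPGroup.iff_card.mp (hG.to_subgroup M)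
  have hcard : Nat.card G = p ^ m * p ^ k := by rw [← hm, ← hk, M.card_mul_index]
  have hdvd : p ^ (m + 1) ∣ Nat.card G := by
    rw [hcard, ← pow_add]
    exact pow_dvd_pow p (by lia)
  obtain ⟨K, hK, hMK⟩ := Sylow.exists_subgroup_card_pow_succ hdvd hm
  have hKM : K ≠ M := by
    rintro rfl
    exact absurd (Nat.pow_right_injective hp.out.two_le (hm.symm.trans hK)) (by lia)
  have hKtop : K = ⊤ := hM.2 K (lt_of_le_of_ne hMK hKM.symm)
  rw [hKtop, Subgroup.card_top, hcard, pow_succ] at hK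
  exact hk.trans (Nat.eq_of_mul_eq_mul_left (pow_pos hp.out.pos m) hK)

theorem subgroupPow_top_le_frattini [Finite G] {p : ℕ} [Fact p.Prime] (hG : IsPGroup p G) :
    subgroupPow (⊤ : Subgroup G) p ≤ frattini G := by
  refine subgroupPow_le_iff.mpr fun x _ => ?_
  simp only [frattini, Order.radical, Subgroup.mem_iInf]
  intro M hM
  have := hG.isNilpotent
  have hMn : M.Normal := Subgroup.NormalizerCondition.normal_of_coatom M
    Group.normalizerCondition_of_isNilpotent hM
  exact index_eq_of_isCoatom hG hM ▸ M.pow_index_mem x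

theorem subgroupPow_lt [Finite G] {p : ℕ} [Fact p.Prime] (hG : IsPGroup p G) {H : Subgroup G}
    (hH : H ≠ ⊥) : subgroupPow H p < H := by
  refine (subgroupPow_le H p).lt_of_ne fun h => hH ?_
  have htop : subgroupPow (⊤ : Subgroup H) p = ⊤ := by
    apply Subgroup.map_injective H.subtype_injective
    rw [map_subgroupPow, ← MonoidHom.range_eq_map, Subgroup.range_subtype, h]
  have hfrattini : frattini H = ⊤ :=
    top_le_iff.mp (htop.ge.trans (subgroupPow_top_le_frattini (hG.to_subgroup H)))
  have hbot : (⊥ : Subgroup H) = ⊤ := frattini_nongenerating (by rw [hfrattini, sup_top_eq])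
  have : Subsingleton H :=
    Subgroup.subsingleton_iff.mp (subsingleton_of_bot_eq_top hbot)
  exact H.eq_bot_of_subsingleton

end SubgroupPow

theorem commutator_subgroupPow_le_of_odd {G : Type*} [Group G] {n : ℕ} (hn : Odd n)
    {N K J : Subgroup G} [J.Normal] (hC : subgroupPow ⁅N, K⁆ n ≤ J)
    (hD : subgroupPow ⁅⁅N, K⁆, N⁆ n ≤ J) (hDG : ⁅⁅⁅N, K⁆, N⁆, (⊤ : Subgroup G)⁆ ≤ J) :
    ⁅subgroupPow N n, K⁆ ≤ J := by
  refine commutator_closure_le ?_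
  rintro _ ⟨x, hx, rfl⟩ g hg
  have hc : ⁅x, g⁆ ∈ ⁅N, K⁆ := Subgroup.commutator_mem_commutator hx hg
  have hd : ⁅⁅x, g⁆, x⁻¹⁆ ∈ ⁅⁅N, K⁆, N⁆ :=
    Subgroup.commutator_mem_commutator hc (N.inv_mem hx)
  have hdG (y : G) : ⁅⁅⁅x, g⁆, x⁻¹⁆, y⁆ ∈ J :=
    hDG (Subgroup.commutator_mem_commutator hd (Subgroup.mem_top y))
  exact commutator_pow_left_mem_of_odd hn (hdG _) (hdG _) (hD (pow_mem_subgroupPow n hd))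
    (hC (pow_mem_subgroupPow n hc))

/-! ### Powerful groups -/

theorem isPowerful_iff {G : Type*} [Group G] {p : ℕ} (hp2 : p ≠ 2) :
    IsPowerful p G ↔ commutator G ≤ subgroupPow (⊤ : Subgroup G) p := by
  rw [IsPowerful, if_neg hp2]

theorem IsPowerful.quotient {G : Type*} [Group G] {p : ℕ} (h : IsPowerful p G)
    (N : Subgroup G) [N.Normal] : IsPowerful p (G ⧸ N) := by
  have htop : (⊤ : Subgroup G).map (QuotientGroup.mk' N) = ⊤ :=
    Subgroup.map_top_of_surjective _ (QuotientGroup.mk'_surjective N)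
  have hmap {n : ℕ} (hn : commutator G ≤ subgroupPow ⊤ n) :
      commutator (G ⧸ N) ≤ subgroupPow ⊤ n := by
    rw [commutator_def, ← htop, ← Subgroup.map_commutator, ← map_subgroupPow]
    exact Subgroup.map_mono hn
  unfold IsPowerful at h ⊢
  split_ifs at h ⊢ <;> exact hmap h

theorem isPowerful_of_commutator_le {G : Type*} [Group G] {p : ℕ} (hp2 : p ≠ 2)
    {H : Subgroup G} (h : ⁅H, H⁆ ≤ subgroupPow H p) : IsPowerful p H := by
  rw [isPowerful_iff hp2, ← Subgroup.map_le_map_iff_of_injective H.subtype_injective,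
    map_subgroupPow, commutator_def, Subgroup.map_commutator, ← MonoidHom.range_eq_map,
    Subgroup.range_subtype]
  exact h

/-- A subgroup `N` is powerfully embedded in `G` if `[N, G] ≤ N ^ p`. This is the notion for odd
`p`; the exponent `4` required when `p = 2` is not covered. -/
def IsPowerfullyEmbedded {G : Type*} [Group G] (p : ℕ) (N : Subgroup G) : Prop :=
  ⁅N, (⊤ : Subgroup G)⁆ ≤ subgroupPow N p

theorem isPowerfullyEmbedded_subgroupPow {G : Type*} [Group G] [Group.IsNilpotent G] {p : ℕ}
    (hp : Odd p) {N : Subgroup G} [N.Normal] (h : IsPowerfullyEmbedded p N) :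
    IsPowerfullyEmbedded p (subgroupPow N p) := by
  set M := subgroupPow N p
  have hX : ⁅⁅N, (⊤ : Subgroup G)⁆, N⁆ ≤ ⁅M, (⊤ : Subgroup G)⁆ :=
    Subgroup.commutator_mono h le_top
  -- Nilpotency lets us work modulo `[M, G, G]`, where the class-two power formula applies.
  apply le_of_le_sup_commutator_top
  refine commutator_subgroupPow_le_of_odd hp ?_ ?_ ?_
  · exact (subgroupPow_mono h p).trans le_sup_left
  · exact (subgroupPow_mono (hX.trans (Subgroup.commutator_le_left M ⊤)) p).trans le_sup_left
  · exact (Subgroup.commutator_mono hX le_rfl).trans le_sup_right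

/-! ### The power series of a powerful group -/

section PowerSeries

/-- The iterated power series `G ≥ G ^ p ≥ (G ^ p) ^ p ≥ ⋯`, written `D n` in comments. It
stands in for `G ^ (p ^ n)`, with which it agrees in a powerful `p`-group for odd `p`
(`subgroupPow_top_eq_pPowerSeries`). -/
def pPowerSeries (p : ℕ) (G : Type*) [Group G] : ℕ → Subgroup G
  | 0 => ⊤
  | n + 1 => subgroupPow (pPowerSeries p G n) p

variable {G : Type*} [Group G] {p : ℕ}

instance pPowerSeries_normal (p : ℕ) (G : Type*) [Group G] (n : ℕ) :
    (pPowerSeries p G n).Normal := by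
  induction n with
  | zero => exact inferInstanceAs (⊤ : Subgroup G).Normal
  | succ n ih => exact subgroupPow_normal _ p

theorem pPowerSeries_antitone (p : ℕ) (G : Type*) [Group G] : Antitone (pPowerSeries p G) :=
  antitone_nat_of_succ_le fun _ => subgroupPow_le _ p

theorem pow_mem_pPowerSeries_add {a : ℕ} {x : G} (hx : x ∈ pPowerSeries p G a) (k : ℕ) :
    x ^ p ^ k ∈ pPowerSeries p G (a + k) := by
  induction k with
  | zero => simpa only [pow_zero, pow_one, Nat.add_zero] using hx
  | succ k ih =>
    rw [pow_succ, pow_mul]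
    exact pow_mem_subgroupPow p ih

theorem pow_mem_pPowerSeries_succ {a : ℕ} {x : G} (hx : x ∈ pPowerSeries p G a) :
    x ^ p ∈ pPowerSeries p G (a + 1) :=
  pow_mem_subgroupPow p hx

theorem map_mem_pPowerSeries {G' : Type*} [Group G'] (f : G →* G') {a : ℕ} {x : G}
    (hx : x ∈ pPowerSeries p G a) : f x ∈ pPowerSeries p G' a := by
  have hmap : (pPowerSeries p G a).map f ≤ pPowerSeries p G' a := by
    clear hx
    induction a with
    | zero => exact le_top
    | succ a ih => exact (map_subgroupPow f _ p).trans_le (subgroupPow_mono ih p)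
  exact hmap (Subgroup.mem_map_of_mem f hx)

theorem commutator_mem_pPowerSeries_one (hp2 : p ≠ 2) (hpow : IsPowerful p G) (x y : G) :
    ⁅x, y⁆ ∈ pPowerSeries p G 1 :=
  (isPowerful_iff hp2).mp hpow
    (Subgroup.commutator_mem_commutator (Subgroup.mem_top x) (Subgroup.mem_top y))

theorem isPowerfullyEmbedded_pPowerSeries [Group.IsNilpotent G] (hp : Odd p)
    (hpow : IsPowerful p G) (n : ℕ) : IsPowerfullyEmbedded p (pPowerSeries p G n) := by
  induction n with
  | zero => exact (isPowerful_iff (hp.ne_two_of_dvd_nat dvd_rfl)).mp hpow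
  | succ n ih => exact isPowerfullyEmbedded_subgroupPow hp ih

theorem commutator_pPowerSeries_le [Group.IsNilpotent G] (hp : Odd p) (hpow : IsPowerful p G)
    (m n : ℕ) : ⁅pPowerSeries p G m, pPowerSeries p G n⁆ ≤ pPowerSeries p G (m + n + 1) := by
  induction m with
  | zero =>
    rw [Subgroup.commutator_comm, Nat.zero_add]
    exact isPowerfullyEmbedded_pPowerSeries hp hpow n
  | succ m ih =>
    have hX : ⁅⁅pPowerSeries p G m, pPowerSeries p G n⁆, pPowerSeries p G m⁆ ≤
        pPowerSeries p G (m + n + 2) :=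
      (Subgroup.commutator_mono ih le_top).trans (isPowerfullyEmbedded_pPowerSeries hp hpow _)
    rw [show m + 1 + n + 1 = m + n + 2 by ring]
    refine commutator_subgroupPow_le_of_odd hp (subgroupPow_mono ih p) ?_ ?_
    · exact (subgroupPow_le _ p).trans hX
    · exact (Subgroup.commutator_mono hX le_rfl).trans (Subgroup.commutator_le_left _ ⊤)

theorem commutator_mem_pPowerSeries [Group.IsNilpotent G] (hp : Odd p) (hpow : IsPowerful p G)
    {m n : ℕ} {x y : G} (hx : x ∈ pPowerSeries p G m) (hy : y ∈ pPowerSeries p G n) :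
    ⁅x, y⁆ ∈ pPowerSeries p G (m + n + 1) :=
  commutator_pPowerSeries_le hp hpow m n (Subgroup.commutator_mem_commutator hx hy)

theorem commutator_mem_pPowerSeries_succ [Group.IsNilpotent G] (hp : Odd p)
    (hpow : IsPowerful p G) {m : ℕ} {x : G} (hx : x ∈ pPowerSeries p G m) (y : G) :
    ⁅x, y⁆ ∈ pPowerSeries p G (m + 1) :=
  commutator_mem_pPowerSeries hp hpow (n := 0) hx (Subgroup.mem_top y)

theorem mk_mul_pow_pPowerSeries [Group.IsNilpotent G] (hp : Odd p) (hpow : IsPowerful p G)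
    {m : ℕ} (x : G) {v : G} (hv : v ∈ pPowerSeries p G m) :
    ((x * v : G) : G ⧸ pPowerSeries p G (m + 2)) ^ p =
      (x : G ⧸ pPowerSeries p G (m + 2)) ^ p * (v : G ⧸ pPowerSeries p G (m + 2)) ^ p := by
  have hd : ⁅v, x⁆ ∈ pPowerSeries p G (m + 1) := commutator_mem_pPowerSeries_succ hp hpow hv x
  exact mk_mul_pow_of_odd hp (commutator_mem_pPowerSeries_succ hp hpow hd x)
    (commutator_mem_pPowerSeries_succ hp hpow hd v) (pow_mem_pPowerSeries_succ hd)

theorem exists_mk_pow_eq [Group.IsNilpotent G] (hp : Odd p) (hpow : IsPowerful p G) {m : ℕ}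
    {z : G} (hz : z ∈ pPowerSeries p G (m + 1)) :
    ∃ v ∈ pPowerSeries p G m, (v : G ⧸ pPowerSeries p G (m + 2)) ^ p = z := by
  let powHom : pPowerSeries p G m →* G ⧸ pPowerSeries p G (m + 2) :=
    MonoidHom.mk' (fun v => ((v : G) : G ⧸ pPowerSeries p G (m + 2)) ^ p) fun v w =>
      mk_mul_pow_pPowerSeries hp hpow (v : G) w.2
  have hle : pPowerSeries p G (m + 1) ≤
      powHom.range.comap (QuotientGroup.mk' (pPowerSeries p G (m + 2))) :=
    subgroupPow_le_iff.mpr fun v hv => ⟨⟨v, hv⟩, rfl⟩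
  obtain ⟨v, hv⟩ := hle hz
  exact ⟨v, v.2, hv⟩

theorem exists_pow_inv_mul_mem [Group.IsNilpotent G] (hp : Odd p) (hpow : IsPowerful p G) {n : ℕ}
    {z : G} (hz : z ∈ pPowerSeries p G (n + 1)) (k : ℕ) :
    ∃ x ∈ pPowerSeries p G n, (x ^ p)⁻¹ * z ∈ pPowerSeries p G (n + k + 1) := by
  induction k with
  | zero => exact ⟨1, Subgroup.one_mem _, by simpa only [one_pow, inv_one, one_mul] using hz⟩
  | succ k ih =>
    obtain ⟨x, hx, herr⟩ := ih
    obtain ⟨v, hv, hvp⟩ := exists_mk_pow_eq hp hpow herr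
    refine ⟨x * v,
      Subgroup.mul_mem _ hx (pPowerSeries_antitone p G (Nat.le_add_right n k) hv), ?_⟩
    have hxv := mk_mul_pow_pPowerSeries hp hpow x hv
    rw [hvp] at hxv
    refine QuotientGroup.eq.mp (hxv.trans ?_)
    exact congrArg _ (mul_inv_cancel_left (x ^ p) z)

theorem isPowerful_zpowers_sup_pPowerSeries_one [Group.IsNilpotent G] (hp : Odd p)
    (hpow : IsPowerful p G) (y : G) :
    IsPowerful p ↥(Subgroup.zpowers y ⊔ pPowerSeries p G 1) := by
  have hle : ⁅Subgroup.zpowers y ⊔ pPowerSeries p G 1, Subgroup.zpowers y ⊔ pPowerSeries p G 1⁆ ≤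
      pPowerSeries p G 2 :=
    commutator_sup_self_le.trans (isPowerfullyEmbedded_pPowerSeries hp hpow 1)
  exact isPowerful_of_commutator_le (hp.ne_two_of_dvd_nat dvd_rfl)
    (hle.trans (subgroupPow_mono le_sup_right p))

end PowerSeries

section PowerSeriesOfPGroup

variable {G : Type*} [Group G] [Finite G] {p : ℕ} [Fact p.Prime]

theorem exists_pPowerSeries_eq_bot (hG : IsPGroup p G) : ∃ n, pPowerSeries p G n = ⊥ := by
  obtain ⟨n, hn⟩ := WellFoundedGT.monotone_chain_condition (α := (Subgroup G)ᵒᵈ)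
    ⟨fun n => OrderDual.toDual (pPowerSeries p G n), fun _ _ h => pPowerSeries_antitone p G h⟩
  refine ⟨n, by_contra fun hne => ?_⟩
  exact (subgroupPow_lt hG hne).ne (hn (n + 1) n.le_succ).symm

theorem exists_pow_eq_of_mem_pPowerSeries (hp : Odd p) (hG : IsPGroup p G)
    (hpow : IsPowerful p G) {n : ℕ} {z : G} (hz : z ∈ pPowerSeries p G (n + 1)) :
    ∃ x ∈ pPowerSeries p G n, x ^ p = z := by
  have := hG.isNilpotent
  obtain ⟨N, hN⟩ := exists_pPowerSeries_eq_bot hG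
  obtain ⟨x, hx, herr⟩ := exists_pow_inv_mul_mem hp hpow hz N
  have herr' := pPowerSeries_antitone p G (show N ≤ n + N + 1 by lia) herr
  rw [hN, Subgroup.mem_bot, inv_mul_eq_one] at herr'
  exact ⟨x, hx, herr'⟩

theorem subgroupPow_top_eq_pPowerSeries (hp : Odd p) (hG : IsPGroup p G) (hpow : IsPowerful p G)
    (n : ℕ) : subgroupPow (⊤ : Subgroup G) (p ^ n) = pPowerSeries p G n := by
  apply le_antisymm
  · refine subgroupPow_le_iff.mpr fun x _ => ?_
    simpa only [Nat.zero_add] using pow_mem_pPowerSeries_add (a := 0) (Subgroup.mem_top x) n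
  · have hroot (z : G) (hz : z ∈ pPowerSeries p G n) : ∃ x : G, x ^ p ^ n = z := by
      induction n generalizing z with
      | zero => exact ⟨z, by rw [pow_zero, pow_one]⟩
      | succ n ih =>
        obtain ⟨y, hy, rfl⟩ := exists_pow_eq_of_mem_pPowerSeries hp hG hpow hz
        obtain ⟨x, rfl⟩ := ih y hy
        exact ⟨x, by rw [pow_succ, pow_mul]⟩
    intro z hz
    obtain ⟨x, rfl⟩ := hroot z hz
    exact pow_mem_subgroupPow _ (Subgroup.mem_top x)

theorem isMulCommutative_of_zpowers_sup_eq_top (hG : IsPGroup p G) {y : G}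
    (h : Subgroup.zpowers y ⊔ pPowerSeries p G 1 = ⊤) : IsMulCommutative G := by
  have htop : Subgroup.zpowers y = ⊤ := frattini_nongenerating <| top_le_iff.mp <|
    h.ge.trans (sup_le_sup_left (subgroupPow_top_le_frattini hG) _)
  have : IsCyclic G := isCyclic_iff_exists_zpowers_eq_top.mpr ⟨y, htop⟩
  infer_instance

end PowerSeriesOfPGroup

/-! ### Omega subgroups -/

section Omega

variable {G : Type*} [Group G] {p : ℕ}

theorem mem_omegaSubgroup_of_pow_eq_one {i : ℕ} {H : Subgroup G} {x : G} (hx : x ∈ H)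
    (hxi : x ^ p ^ i = 1) : x ∈ omegaSubgroup p i H :=
  Subgroup.subset_closure ⟨hx, hxi⟩

theorem omegaSubgroup_le (p i : ℕ) (H : Subgroup G) : omegaSubgroup p i H ≤ H :=
  (Subgroup.closure_le H).mpr fun _ hx => hx.1

theorem pow_pow_eq_one_of_le {a b : ℕ} (hab : a ≤ b) {x : G} (hx : x ^ p ^ a = 1) :
    x ^ p ^ b = 1 :=
  orderOf_dvd_iff_pow_eq_one.mp ((orderOf_dvd_of_pow_eq_one hx).trans (pow_dvd_pow p hab))

theorem omegaSubgroup_mono {a b : ℕ} (hab : a ≤ b) {H K : Subgroup G} (hHK : H ≤ K) :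
    omegaSubgroup p a H ≤ omegaSubgroup p b K :=
  Subgroup.closure_mono fun _ hx => ⟨hHK hx.1, pow_pow_eq_one_of_le hab hx.2⟩

instance omegaSubgroup_normal (p i : ℕ) (H : Subgroup G) [hH : H.Normal] :
    (omegaSubgroup p i H).Normal :=
  closure_normal_of_conj_mem fun x hx g =>
    ⟨hH.conj_mem x hx.1 g, by rw [conj_pow, hx.2, mul_one, mul_inv_cancel]⟩

theorem map_subtype_omegaSubgroup_top (p i : ℕ) (H : Subgroup G) :
    (omegaSubgroup p i (⊤ : Subgroup H)).map H.subtype = omegaSubgroup p i H := by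
  rw [omegaSubgroup, omegaSubgroup, MonoidHom.map_closure]
  congr 1
  ext x
  constructor
  · rintro ⟨y, ⟨-, hy⟩, rfl⟩
    exact ⟨y.2, by rw [← map_pow, hy, map_one]⟩
  · rintro ⟨hx, hxi⟩
    exact ⟨⟨x, hx⟩, ⟨trivial, Subtype.ext hxi⟩, rfl⟩

theorem mk_pow_eq_one_of_pow_succ_eq_one {k : ℕ} {z : G} (hz : z ^ p ^ (k + 1) = 1) :
    (z : G ⧸ omegaSubgroup p 1 (⊤ : Subgroup G)) ^ p ^ k = 1 :=
  (QuotientGroup.eq_one_iff (z ^ p ^ k)).mpr <| mem_omegaSubgroup_of_pow_eq_one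
    (Subgroup.mem_top _) (by rw [← pow_mul, ← pow_add, hz])

theorem pow_eq_one_of_mem_omegaSubgroup {i : ℕ} {H : Subgroup G}
    (hmul : ∀ x ∈ H, ∀ y ∈ H, x ^ p ^ i = 1 → y ^ p ^ i = 1 → (x * y) ^ p ^ i = 1) {x : G}
    (hx : x ∈ omegaSubgroup p i H) : x ^ p ^ i = 1 := by
  induction hx using Subgroup.closure_induction with
  | mem x hx => exact hx.2
  | one => exact one_pow _
  | mul x y hx hy hxi hyi =>
    exact hmul x (omegaSubgroup_le p i H hx) y (omegaSubgroup_le p i H hy) hxi hyi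
  | inv x _ hxi => rw [inv_pow, hxi, inv_one]

theorem omegaSubgroup_one_ne_bot [Finite G] [hp : Fact p.Prime] (hG : IsPGroup p G)
    {H : Subgroup G} (hH : H ≠ ⊥) : omegaSubgroup p 1 H ≠ ⊥ := by
  have hdvd : p ∣ Nat.card H :=
    (hG.to_subgroup H).card_eq_or_dvd.resolve_left (H.one_lt_card_iff_ne_bot.mpr hH).ne'
  obtain ⟨x, hx⟩ := exists_prime_orderOf_dvd_card' p hdvd
  rw [← Subgroup.orderOf_coe] at hx
  have hmem : (x : G) ∈ omegaSubgroup p 1 H :=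
    mem_omegaSubgroup_of_pow_eq_one x.2 (by rw [pow_one, ← hx, pow_orderOf_eq_one])
  intro hbot
  rw [hbot, Subgroup.mem_bot] at hmem
  rw [hmem, orderOf_one] at hx
  exact hp.out.one_lt.ne hx

end Omega

/-! ### Control of element orders -/

section OrderControlled

/-- The two facts about element orders that are proved together by induction on the order of the
group: `Ω_i(G)` has exponent dividing `p ^ i`, and `[Ω_{b + 1}(D a), Ω_a(D b)] = 1`, where
`D n = pPowerSeries p G n`. The second is stated for elements of the given orders. -/
structure OrderControlled (p : ℕ) (G : Type*) [Group G] : Prop where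
  pow_eq_one_of_mem_omega {i : ℕ} {x : G} (hx : x ∈ omegaSubgroup p i (⊤ : Subgroup G)) :
    x ^ p ^ i = 1
  commute_of_pow_eq_one {a b : ℕ} {x y : G} (hx : x ∈ pPowerSeries p G a)
    (hy : y ∈ pPowerSeries p G b) (hxp : x ^ p ^ (b + 1) = 1) (hyp : y ^ p ^ a = 1) : Commute x y

variable {G : Type*} [Group G] {p : ℕ}

theorem orderControlled_of_isMulCommutative [hG : IsMulCommutative G] : OrderControlled p G where
  pow_eq_one_of_mem_omega hx := pow_eq_one_of_mem_omegaSubgroup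
    (fun x _ y _ hx hy => by
      have hxy : Commute x y := hG.is_comm.comm x y
      rw [hxy.mul_pow, hx, hy, one_mul]) hx
  commute_of_pow_eq_one {_ _ x y} _ _ _ _ := hG.is_comm.comm x y

theorem OrderControlled.pow_eq_one_of_mem_omegaSubgroup {H : Subgroup G}
    (h : OrderControlled p H) {i : ℕ} {x : G} (hx : x ∈ omegaSubgroup p i H) :
    x ^ p ^ i = 1 := by
  rw [← map_subtype_omegaSubgroup_top] at hx
  obtain ⟨y, hy, rfl⟩ := hx
  rw [← map_pow, h.pow_eq_one_of_mem_omega hy, map_one]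

/-- Both `y` and its conjugate by `g` lie in `Ω_i` of the normal subgroup `⟨y, G ^ p⟩`. -/
theorem commutator_pow_eq_one_of_zpowers_sup (hp2 : p ≠ 2) (hpow : IsPowerful p G) {y : G}
    (h : OrderControlled p ↥(Subgroup.zpowers y ⊔ pPowerSeries p G 1)) {i : ℕ}
    (hy : y ^ p ^ i = 1) (g : G) : ⁅y, g⁆ ^ p ^ i = 1 := by
  have hD : commutator G ≤ pPowerSeries p G 1 := (isPowerful_iff hp2).mp hpow
  have hnormal : (Subgroup.zpowers y ⊔ pPowerSeries p G 1).Normal :=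
    Subgroup.Normal.of_commutator_le _ (hD.trans le_sup_right)
  have hmem : y ∈ omegaSubgroup p i (Subgroup.zpowers y ⊔ pPowerSeries p G 1) :=
    mem_omegaSubgroup_of_pow_eq_one (Subgroup.mem_sup_left (Subgroup.mem_zpowers y)) hy
  exact h.pow_eq_one_of_mem_omegaSubgroup <|
    Subgroup.commutator_le_left _ ⊤ (Subgroup.commutator_mem_commutator hmem (Subgroup.mem_top g))

theorem commutator_mem_omegaSubgroup_one (hp2 : p ≠ 2) (hpow : IsPowerful p G)
    (hquot : OrderControlled p (G ⧸ omegaSubgroup p 1 (pPowerSeries p G 1))) {a b : ℕ} {w y : G}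
    (hsub : OrderControlled p ↥(Subgroup.zpowers y ⊔ pPowerSeries p G 1))
    (hw : w ∈ pPowerSeries p G a) (hy : y ∈ pPowerSeries p G b) (hwp : w ^ p ^ (b + 2) = 1)
    (hyp : y ^ p ^ (a + 1) = 1) : ⁅w, y⁆ ∈ omegaSubgroup p 1 (pPowerSeries p G 1) := by
  have hmem {x : G} {k n : ℕ} (hx : x ∈ pPowerSeries p G k) (hkn : 1 ≤ k + n)
      (hxp : x ^ p ^ (n + 1) = 1) : x ^ p ^ n ∈ omegaSubgroup p 1 (pPowerSeries p G 1) :=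
    mem_omegaSubgroup_of_pow_eq_one
      (pPowerSeries_antitone p G hkn (pow_mem_pPowerSeries_add hx n))
      (by rw [← pow_mul, ← pow_add, hxp])
  rcases Nat.eq_zero_or_pos (a + b) with hab | hab
  · obtain ⟨rfl, rfl⟩ : a = 0 ∧ b = 0 := by lia
    rw [← commutatorElement_inv]
    refine Subgroup.inv_mem _ (mem_omegaSubgroup_of_pow_eq_one ?_ ?_)
    · exact commutator_mem_pPowerSeries_one hp2 hpow y w
    · exact commutator_pow_eq_one_of_zpowers_sup hp2 hpow hsub hyp w
  · have hwE : w ^ p ^ (b + 1) ∈ omegaSubgroup p 1 (pPowerSeries p G 1) :=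
      hmem hw (by lia) hwp
    have hyE : y ^ p ^ a ∈ omegaSubgroup p 1 (pPowerSeries p G 1) := hmem hy (by lia) hyp
    rw [← QuotientGroup.eq_one_iff] at hwE hyE
    exact commute_mk_iff.mp (hquot.commute_of_pow_eq_one
      (map_mem_pPowerSeries (QuotientGroup.mk' _) hw)
      (map_mem_pPowerSeries (QuotientGroup.mk' _) hy) hwE hyE)

theorem commute_pow_left_of_commutator_mem [Group.IsNilpotent G] (hp : Odd p)
    (hpow : IsPowerful p G)
    (hexp : ∀ x ∈ omegaSubgroup p 1 (pPowerSeries p G 1), x ^ p = 1) {a b : ℕ} {w y : G}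
    (hw : w ∈ pPowerSeries p G a) (hy : y ∈ pPowerSeries p G b) (hwp : w ^ p ^ (b + 2) = 1)
    (hwy : ⁅w, y⁆ ∈ omegaSubgroup p 1 (pPowerSeries p G 1))
    (hcomm : ∀ d ∈ pPowerSeries p G (a + b + 2), d ^ p = 1 →
      ∀ z : G, z ^ p ^ (a + b + 2) = 1 → Commute d z) : Commute (w ^ p) y := by
  have hc : ⁅w, y⁆ ∈ pPowerSeries p G (a + b + 1) := commutator_mem_pPowerSeries hp hpow hw hy
  have hd : ⁅⁅w, y⁆, w⁻¹⁆ ∈ pPowerSeries p G (a + b + 2) :=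
    commutator_mem_pPowerSeries_succ hp hpow hc w⁻¹
  have hdp : ⁅⁅w, y⁆, w⁻¹⁆ ^ p = 1 := hexp _ <| Subgroup.commutator_le_left _ ⊤ <|
    Subgroup.commutator_mem_commutator hwy (Subgroup.mem_top w⁻¹)
  have hdw : Commute ⁅⁅w, y⁆, w⁻¹⁆ w :=
    hcomm _ hd hdp w (pow_pow_eq_one_of_le (by lia) hwp)
  have hdc : Commute ⁅⁅w, y⁆, w⁻¹⁆ ⁅w, y⁆ :=
    hcomm _ hd hdp _ (pow_pow_eq_one_of_le (a := 1) (by lia) (by rw [pow_one, hexp _ hwy]))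
  rw [← commutatorElement_eq_one_iff_commute, commutator_pow_left_of_odd hp hdw hdc hdp,
    hexp _ hwy]

end OrderControlled

section InductiveStep

variable {G : Type*} [Group G] [Finite G] {p : ℕ} [Fact p.Prime]

/-- The case `b = 0` of the commutation relation, by downward induction on `n`: it is vacuous
once `D n = 1`. -/
theorem commute_of_mem_pPowerSeries_of_pow_eq_one (hp : Odd p) (hG : IsPGroup p G)
    (hpow : IsPowerful p G)
    (hexp : ∀ x ∈ omegaSubgroup p 1 (pPowerSeries p G 1), x ^ p = 1)
    (hquot : OrderControlled p (G ⧸ omegaSubgroup p 1 (pPowerSeries p G 1)))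
    (hsub : ∀ y : G, OrderControlled p ↥(Subgroup.zpowers y ⊔ pPowerSeries p G 1)) {n : ℕ} {d : G}
    (hd : d ∈ pPowerSeries p G n) (hdp : d ^ p = 1) {z : G} (hz : z ^ p ^ n = 1) :
    Commute d z := by
  have := hG.isNilpotent
  obtain ⟨N, hN⟩ := exists_pPowerSeries_eq_bot hG
  obtain ⟨k, hk⟩ : ∃ k, N ≤ n + k := ⟨N, by lia⟩
  induction k generalizing n d z with
  | zero =>
    have hd1 : d ∈ (⊥ : Subgroup G) := hN ▸ pPowerSeries_antitone p G hk hd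
    rw [Subgroup.mem_bot.mp hd1]
    exact Commute.one_left z
  | succ k ih =>
    cases n with
    | zero =>
      rw [pow_zero, pow_one] at hz
      exact hz ▸ Commute.one_right d
    | succ n =>
      obtain ⟨w, hw, rfl⟩ := exists_pow_eq_of_mem_pPowerSeries hp hG hpow hd
      have hwp : w ^ p ^ 2 = 1 := by rw [pow_two, pow_mul, hdp]
      have hzmem : z ∈ pPowerSeries p G 0 := Subgroup.mem_top z
      exact commute_pow_left_of_commutator_mem hp hpow hexp hw hzmem hwp
        (commutator_mem_omegaSubgroup_one (hp.ne_two_of_dvd_nat dvd_rfl) hpow hquot (hsub z) hw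
          hzmem hwp hz)
        fun _ he hep z' hz' => ih he hep hz' (by lia)

theorem commute_of_pow_eq_one_of_proper (hp : Odd p) (hG : IsPGroup p G)
    (hpow : IsPowerful p G)
    (hexp : ∀ x ∈ omegaSubgroup p 1 (pPowerSeries p G 1), x ^ p = 1)
    (hquot : OrderControlled p (G ⧸ omegaSubgroup p 1 (pPowerSeries p G 1)))
    (hsub : ∀ y : G, OrderControlled p ↥(Subgroup.zpowers y ⊔ pPowerSeries p G 1)) {a b : ℕ}
    {x y : G} (hx : x ∈ pPowerSeries p G a) (hy : y ∈ pPowerSeries p G b)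
    (hxp : x ^ p ^ (b + 1) = 1) (hyp : y ^ p ^ a = 1) : Commute x y := by
  have := hG.isNilpotent
  cases a with
  | zero =>
    rw [pow_zero, pow_one] at hyp
    exact hyp ▸ Commute.one_right x
  | succ a =>
    obtain ⟨w, hw, rfl⟩ := exists_pow_eq_of_mem_pPowerSeries hp hG hpow hx
    have hwp : w ^ p ^ (b + 2) = 1 := by rw [pow_succ', pow_mul, hxp]
    exact commute_pow_left_of_commutator_mem hp hpow hexp hw hy hwp
      (commutator_mem_omegaSubgroup_one (hp.ne_two_of_dvd_nat dvd_rfl) hpow hquot (hsub y) hw hy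
        hwp hyp)
      fun _ hd hdp _ hz =>
        commute_of_mem_pPowerSeries_of_pow_eq_one hp hG hpow hexp hquot hsub hd hdp hz

end InductiveStep

section OmegaExponent

variable {G : Type*} [Group G] {p : ℕ}

theorem pow_eq_one_of_mem_omegaSubgroup_one (hp : Odd p) (hpow : IsPowerful p G)
    (hsub : ∀ y : G, OrderControlled p ↥(Subgroup.zpowers y ⊔ pPowerSeries p G 1))
    (hcomm : ∀ d ∈ pPowerSeries p G 1, d ^ p = 1 → ∀ z : G, z ^ p = 1 → Commute d z) {x : G}
    (hx : x ∈ omegaSubgroup p 1 (⊤ : Subgroup G)) : x ^ p = 1 := by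
  rw [← pow_one p]
  refine pow_eq_one_of_mem_omegaSubgroup (fun x _ y _ hx hy => ?_) hx
  have hp2 : p ≠ 2 := hp.ne_two_of_dvd_nat dvd_rfl
  have hdp : ⁅y, x⁆ ^ p ^ 1 = 1 := commutator_pow_eq_one_of_zpowers_sup hp2 hpow (hsub y) hy x
  have hd : ⁅y, x⁆ ∈ pPowerSeries p G 1 := commutator_mem_pPowerSeries_one hp2 hpow y x
  rw [pow_one] at hx hy hdp ⊢
  rw [mul_pow_of_odd hp (hcomm _ hd hdp x hx) (hcomm _ hd hdp y hy) hdp, hx, hy, one_mul]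

theorem pow_eq_one_of_mem_omegaSubgroup_of_quotient
    (hexp : ∀ x ∈ omegaSubgroup p 1 (⊤ : Subgroup G), x ^ p = 1)
    (hquot : OrderControlled p (G ⧸ omegaSubgroup p 1 (⊤ : Subgroup G))) {i : ℕ} {x : G}
    (hx : x ∈ omegaSubgroup p i (⊤ : Subgroup G)) : x ^ p ^ i = 1 := by
  cases i with
  | zero =>
    refine pow_eq_one_of_mem_omegaSubgroup (fun x _ y _ hx hy => ?_) hx
    rw [pow_zero, pow_one] at hx hy ⊢
    rw [hx, hy, one_mul]
  | succ i =>
    refine pow_eq_one_of_mem_omegaSubgroup (fun x _ y _ hx hy => ?_) hx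
    have hmk {z : G} (hz : z ^ p ^ (i + 1) = 1) :
        (z : G ⧸ omegaSubgroup p 1 (⊤ : Subgroup G)) ∈ omegaSubgroup p i ⊤ :=
      mem_omegaSubgroup_of_pow_eq_one (Subgroup.mem_top _) (mk_pow_eq_one_of_pow_succ_eq_one hz)
    have hxy : (x * y) ^ p ^ i ∈ omegaSubgroup p 1 (⊤ : Subgroup G) :=
      (QuotientGroup.eq_one_iff _).mp
        (hquot.pow_eq_one_of_mem_omega (Subgroup.mul_mem _ (hmk hx) (hmk hy)))
    rw [pow_succ, pow_mul, hexp _ hxy]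

end OmegaExponent

theorem orderControlled_of_proper {G : Type*} [Group G] [Finite G] {p : ℕ} [Fact p.Prime]
    (hp : Odd p) (hG : IsPGroup p G) (hpow : IsPowerful p G)
    (hsub : ∀ H : Subgroup G, H ≠ ⊤ → IsPowerful p H → OrderControlled p H)
    (hquot : ∀ (N : Subgroup G) [N.Normal], N ≠ ⊥ → OrderControlled p (G ⧸ N)) :
    OrderControlled p G := by
  have := hG.isNilpotent
  by_cases hab : IsMulCommutative G
  · exact orderControlled_of_isMulCommutative
  have hz (y : G) : OrderControlled p ↥(Subgroup.zpowers y ⊔ pPowerSeries p G 1) :=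
    hsub _ (fun h => hab (isMulCommutative_of_zpowers_sup_eq_top hG h))
      (isPowerful_zpowers_sup_pPowerSeries_one hp hpow y)
  have hD : pPowerSeries p G 1 ≠ ⊥ := fun h => hab ⟨⟨fun x y => by
    have hxy := commutator_mem_pPowerSeries_one (hp.ne_two_of_dvd_nat dvd_rfl) hpow x y
    rwa [h, Subgroup.mem_bot, commutatorElement_eq_one_iff_mul_comm] at hxy⟩⟩
  have hG1 : (⊤ : Subgroup G) ≠ ⊥ := ne_bot_of_le_ne_bot hD le_top
  have hexpD : ∀ x ∈ omegaSubgroup p 1 (pPowerSeries p G 1), x ^ p = 1 := fun x hx => by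
    have hD1 := hz 1
    rw [Subgroup.zpowers_one_eq_bot, bot_sup_eq] at hD1
    simpa only [pow_one] using hD1.pow_eq_one_of_mem_omegaSubgroup hx
  have hcomm {a b : ℕ} {x y : G} (hx : x ∈ pPowerSeries p G a) (hy : y ∈ pPowerSeries p G b)
      (hxp : x ^ p ^ (b + 1) = 1) (hyp : y ^ p ^ a = 1) : Commute x y :=
    commute_of_pow_eq_one_of_proper hp hG hpow hexpD
      (hquot _ (omegaSubgroup_one_ne_bot hG hD)) hz hx hy hxp hyp
  have hexp : ∀ x ∈ omegaSubgroup p 1 (⊤ : Subgroup G), x ^ p = 1 := fun x hx =>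
    pow_eq_one_of_mem_omegaSubgroup_one hp hpow hz (fun d hd hdp z hzp =>
      hcomm hd (b := 0) (Subgroup.mem_top z) (by rwa [zero_add, pow_one]) (by rwa [pow_one])) hx
  exact ⟨pow_eq_one_of_mem_omegaSubgroup_of_quotient hexp
    (hquot _ (omegaSubgroup_one_ne_bot hG hG1)), hcomm⟩

theorem orderControlled_of_isPowerful {G : Type*} [Group G] [Finite G] {p : ℕ} [Fact p.Prime]
    (hp : Odd p) (hG : IsPGroup p G) (hpow : IsPowerful p G) : OrderControlled p G := by
  induction hn : Nat.card G using Nat.strong_induction_on generalizing G with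
  | _ n ih =>
    subst hn
    refine orderControlled_of_proper hp hG hpow (fun H hH hpowH => ?_) (fun N _ hN => ?_)
    · have hlt : Nat.card H < Nat.card G := lt_of_not_ge fun h => hH (H.eq_top_of_le_card h)
      exact ih _ hlt (hG.to_subgroup H) hpowH rfl
    · have hlt : Nat.card (G ⧸ N) < Nat.card G := by
        rw [N.card_eq_card_quotient_mul_card_subgroup]
        exact lt_mul_of_one_lt_right Nat.card_pos (N.one_lt_card_iff_ne_bot.mpr hN)
      exact ih _ hlt (hG.to_quotient N) (hpow.quotient N) rfl

theorem pow_eq_one_of_mem_omegaSubgroup_of_isPowerful {G : Type*} [Group G] [Finite G] {p : ℕ}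
    [Fact p.Prime] (hp : Odd p) (hG : IsPGroup p G) (hpow : IsPowerful p G) {i : ℕ}
    {H : Subgroup G} {x : G} (hx : x ∈ omegaSubgroup p i H) : x ^ p ^ i = 1 :=
  (orderControlled_of_isPowerful hp hG hpow).pow_eq_one_of_mem_omega
    (omegaSubgroup_mono le_rfl le_top hx)

theorem commutator_pow_eq_one_of_pow_eq_one {G : Type*} [Group G] [Finite G] {p : ℕ}
    [Fact p.Prime] (hp : Odd p) (hG : IsPGroup p G) (hpow : IsPowerful p G) {a b n : ℕ} {x y : G}
    (hx : x ∈ pPowerSeries p G a) (hy : y ∈ pPowerSeries p G b) (hxp : x ^ p ^ (b + n + 1) = 1)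
    (hyp : y ^ p ^ (a + n) = 1) : ⁅x, y⁆ ^ p ^ n = 1 := by
  induction n generalizing G with
  | zero =>
    rw [pow_zero, pow_one, commutatorElement_eq_one_iff_commute]
    exact (orderControlled_of_isPowerful hp hG hpow).commute_of_pow_eq_one hx hy hxp hyp
  | succ n ih =>
    have hxy : ⁅x, y⁆ ^ p ^ n ∈ omegaSubgroup p 1 (⊤ : Subgroup G) :=
      (QuotientGroup.eq_one_iff _).mp <| ih (hG.to_quotient _) (hpow.quotient _)
        (map_mem_pPowerSeries (QuotientGroup.mk' _) hx)
        (map_mem_pPowerSeries (QuotientGroup.mk' _) hy) (mk_pow_eq_one_of_pow_succ_eq_one hxp)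
        (mk_pow_eq_one_of_pow_succ_eq_one hyp)
    rw [pow_add, pow_mul, pow_eq_one_of_mem_omegaSubgroup_of_isPowerful hp hG hpow hxy]

/-! ### The powerfully central chain -/

section Chain

theorem IsPowerfullyCentralChain.isPowerful {G : Type*} [Group G] {p n : ℕ} (hp2 : p ≠ 2)
    {H : ℕ → Subgroup G} (h : IsPowerfullyCentralChain p n H) : IsPowerful p G := by
  obtain ⟨hbot, htop, -, hstep⟩ := h
  rw [isPowerful_iff hp2]
  cases n with
  | zero => exact le_top.trans ((htop.symm.trans hbot).trans_le bot_le)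
  | succ n =>
    rw [commutator_def]
    exact (htop ▸ hstep n n.lt_succ_self).trans (subgroupPow_mono le_top p)

/-- The subgroups of `G` whose intersections with `Ω_i(D j)`, where `D n = pPowerSeries p G n`,
form a powerfully central chain of `Ω_i(D j)` of length `i`: trivial at `0`, and
`Ω_{m + 1}(D (i - m + j))` at `1 ≤ m ≤ i`. -/
def omegaChain (p : ℕ) (G : Type*) [Group G] (i j : ℕ) : ℕ → Subgroup G
  | 0 => ⊥
  | m + 1 => omegaSubgroup p (m + 2) (pPowerSeries p G (i - (m + 1) + j))

theorem omegaChain_monotone (p : ℕ) (G : Type*) [Group G] (i j : ℕ) :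
    Monotone (omegaChain p G i j) := by
  refine monotone_nat_of_le_succ fun m => ?_
  cases m with
  | zero => exact bot_le
  | succ m => exact omegaSubgroup_mono (by lia) (pPowerSeries_antitone p G (by lia))

variable {G : Type*} [Group G] [Finite G] {p : ℕ} [Fact p.Prime]

theorem commutator_pow_eq_one_of_mem_omegaChain (hp : Odd p) (hG : IsPGroup p G)
    (hpow : IsPowerful p G) {i j m : ℕ} (hj : 1 ≤ j) (hm : m < i) {x y : G}
    (hx : x ∈ omegaChain p G i j (m + 1)) (hy : y ∈ omegaSubgroup p i (pPowerSeries p G j)) :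
    ⁅x, y⁆ ^ p ^ m = 1 := by
  have hxD : x ∈ pPowerSeries p G (i - m) :=
    pPowerSeries_antitone p G (by lia) (omegaSubgroup_le _ _ _ hx)
  have hyD : y ∈ pPowerSeries p G 1 := pPowerSeries_antitone p G hj (omegaSubgroup_le _ _ _ hy)
  have hxp : x ^ p ^ (1 + m + 1) = 1 := by
    rw [show 1 + m + 1 = m + 2 by ring]
    exact pow_eq_one_of_mem_omegaSubgroup_of_isPowerful hp hG hpow hx
  have hyp : y ^ p ^ (i - m + m) = 1 := by
    rw [Nat.sub_add_cancel hm.le]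
    exact pow_eq_one_of_mem_omegaSubgroup_of_isPowerful hp hG hpow hy
  exact commutator_pow_eq_one_of_pow_eq_one hp hG hpow hxD hyD hxp hyp

theorem exists_mem_omegaChain_pow_eq_commutator (hp : Odd p) (hG : IsPGroup p G)
    (hpow : IsPowerful p G) {i j m : ℕ} (hj : 1 ≤ j) (hm : m < i) {x y : G}
    (hx : x ∈ omegaChain p G i j (m + 1)) (hy : y ∈ omegaSubgroup p i (pPowerSeries p G j)) :
    ∃ z ∈ omegaSubgroup p i (pPowerSeries p G j), z ∈ omegaChain p G i j m ∧ z ^ p = ⁅x, y⁆ := by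
  have := hG.isNilpotent
  have hxy := commutator_pow_eq_one_of_mem_omegaChain hp hG hpow hj hm hx hy
  cases m with
  | zero =>
    rw [pow_zero, pow_one] at hxy
    exact ⟨1, Subgroup.one_mem _, Subgroup.one_mem _, by rw [one_pow, hxy]⟩
  | succ m =>
    have hmem : ⁅x, y⁆ ∈ pPowerSeries p G (i - (m + 1) + j + 1) :=
      pPowerSeries_antitone p G (by lia) (commutator_mem_pPowerSeries hp hpow
        (omegaSubgroup_le _ _ _ hx) (omegaSubgroup_le _ _ _ hy))
    obtain ⟨z, hz, hzp⟩ := exists_pow_eq_of_mem_pPowerSeries hp hG hpow hmem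
    have hzord : z ^ p ^ (m + 2) = 1 := by rw [pow_succ', pow_mul, hzp, hxy]
    refine ⟨z, mem_omegaSubgroup_of_pow_eq_one ?_ ?_,
      mem_omegaSubgroup_of_pow_eq_one hz hzord, hzp⟩
    · exact pPowerSeries_antitone p G (by lia) hz
    · exact pow_pow_eq_one_of_le hm hzord

theorem isPowerfullyCentralChain_omegaChain (hp : Odd p) (hG : IsPGroup p G)
    (hpow : IsPowerful p G) {i j : ℕ} (hi : 1 ≤ i) (hj : 1 ≤ j) :
    IsPowerfullyCentralChain p i fun m =>
      (omegaChain p G i j m).subgroupOf (omegaSubgroup p i (pPowerSeries p G j)) := by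
  refine ⟨Subgroup.bot_subgroupOf _, ?_, fun m _ => ?_, fun m hm => ?_⟩
  · rw [Subgroup.subgroupOf_eq_top]
    obtain ⟨k, rfl⟩ := Nat.exists_eq_add_of_le' hi
    exact omegaSubgroup_mono (by lia) (pPowerSeries_antitone p G (by lia))
  · exact Subgroup.comap_mono (omegaChain_monotone p G i j m.le_succ)
  · refine Subgroup.commutator_le.mpr fun x hx y _ => ?_
    obtain ⟨z, hzΩ, hz, hzp⟩ :=
      exists_mem_omegaChain_pow_eq_commutator hp hG hpow hj hm hx y.2
    have hxy : (⟨z, hzΩ⟩ : omegaSubgroup p i (pPowerSeries p G j)) ^ p = ⁅x, y⁆ :=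
      Subtype.ext hzp
    rw [← hxy]
    exact pow_mem_subgroupPow p hz

end Chain

theorem omega_statement_11 (p : ℕ) (hp : p.Prime) (hp2 : p ≠ 2) (G : Type*) [Group G]
    [Finite G] (hG : IsPGroup p G) (hpow : IsPowerful p G) (i j : ℕ) (hi : 1 ≤ i)
    (hj : 1 ≤ j) :
    IsPowerfullyNilpotent p ↥(omegaSubgroup p i (subgroupPow (⊤ : Subgroup G) (p ^ j))) ∧
      powerfulNilpotencyClass p
        ↥(omegaSubgroup p i (subgroupPow (⊤ : Subgroup G) (p ^ j))) ≤ i := by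
  have : Fact p.Prime := ⟨hp⟩
  have hodd : Odd p := hp.odd_of_ne_two hp2
  rw [subgroupPow_top_eq_pPowerSeries hodd hG hpow j]
  have hchain := isPowerfullyCentralChain_omegaChain hodd hG hpow hi hj
  exact ⟨⟨hchain.isPowerful hp2, i, _, hchain⟩, Nat.sInf_le ⟨_, hchain⟩⟩
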